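/- Let τ ∈ Z[λ]. If 4 divides τ, then σ² ∈ G_0(τ) for every σ ∈ G_0(τ/2). If 16 divides τ, then for all σ, σ₁, σ₂ ∈ G_0(τ/4) one has σ⁴ ∈ G_0(τ) and the commutator σ₁σ₂σ₁⁻¹σ₂⁻¹ ∈ G_0(τ). -/

import Mathlib

/-!
Everything rests on the behaviour of `G₅` modulo `2`. The quadratic form
`Q(x, y) = x² + λxy + y²` is preserved modulo `2` by both generators of `G₅`, so the first
column `(a, c)` of every matrix representing an element of `G₅` satisfies
`a² + λac + c² ≡ 1 (mod 2)` (`goodCol_of_mem_G5`). If `2 ∣ c` this says `a² ≡ 1 (mod 2)`, and since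
`ℤ[λ]/2` is the field with four elements (`x⁴ ≡ x`, see `pow_four_sub_self`), already
`a ≡ 1 (mod 2)`; the determinant then gives `d ≡ 1 (mod 2)` (`diag_odd`).

The three claims are now computations of lower left entries.
* For `σ²` it is `c(a + d)`, and `a + d` is even.
* For `σ⁴` it is `c(a + d)(a² + 2bc + d²)`, and both factors after `c` are even.
* For the commutator, terms quadratic in `c₁, c₂` are divisible by `(τ/4)² = τ · (τ/16)`, and the
  linear part is `d₁d₂(c₁(a₂ - d₂) - c₂(a₁ - d₁))`. Here `4 ∣ aᵢ - dᵢ`, because `aᵢ` and `dᵢ` are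
  odd with `aᵢdᵢ ≡ 1 (mod 4)` (`exists_diag_sub`).
-/

open Matrix

noncomputable section

/-- `λ = 2 cos(π/5) = (1+√5)/2`. -/
def lam : ℝ := 2 * Real.cos (Real.pi / 5)

/-- The ring `ℤ[λ]`, as a subring of `ℝ`. -/
def Zlam : Subring ℝ := Subring.closure {lam}

/-- `λ` as an element of `ℤ[λ]`. -/
def lamZ : Zlam := ⟨lam, Subring.subset_closure rfl⟩

/-- `SL(2,ℝ)`. -/
abbrev SL2R := Matrix.SpecialLinearGroup (Fin 2) ℝ

/-- `PSL(2,ℝ)`, realized as `SL(2,ℝ)` modulo its center `{±1}`. -/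
abbrev PSL2R := SL2R ⧸ Subgroup.center SL2R

/-- The canonical projection `SL(2,ℝ) → PSL(2,ℝ)`. -/
def toPSL : SL2R →* PSL2R := QuotientGroup.mk' (Subgroup.center SL2R)

/-- The generator `[[1, λ], [0, 1]]` of the Hecke group `G₅`. -/
def Tgen : SL2R := ⟨!![1, lam; 0, 1], by simp [Matrix.det_fin_two_of]⟩

/-- The generator `[[0, -1], [1, 0]]` of the Hecke group `G₅`. -/
def Sgen : SL2R := ⟨!![0, -1; 1, 0], by simp [Matrix.det_fin_two_of]⟩

/-- The Hecke group `G₅ ≤ PSL(2,ℝ)`, generated by the images of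
`[[1, λ], [0, 1]]` and `[[0, -1], [1, 0]]`. -/
def G5 : Subgroup PSL2R := Subgroup.closure {toPSL Tgen, toPSL Sgen}

/-- The subgroup of `SL(2,ℝ)` of matrices with entries in `ℤ[λ]` whose `(2,1)` entry is
divisible by `τ`. -/
def SL0 (τ : ℝ) : Subgroup SL2R where
  carrier := { A | (∀ i j, A.1 i j ∈ Zlam) ∧ ∃ k ∈ Zlam, A.1 1 0 = τ * k }
  one_mem' := by
    refine ⟨fun i j => ?_, 0, Zlam.zero_mem, by simp⟩
    rcases Decidable.eq_or_ne i j with h | h <;>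
      simp [Matrix.one_apply, h, Zlam.one_mem, Zlam.zero_mem]
  mul_mem' := by
    rintro A B ⟨hA, kA, hkA, hA10⟩ ⟨hB, kB, hkB, hB10⟩
    constructor
    · intro i j
      have : (A * B).1 i j = A.1 i 0 * B.1 0 j + A.1 i 1 * B.1 1 j := by
        simp [Matrix.mul_apply, Fin.sum_univ_two]
      rw [this]
      exact Zlam.add_mem (Zlam.mul_mem (hA i 0) (hB 0 j)) (Zlam.mul_mem (hA i 1) (hB 1 j))
    · refine ⟨kA * B.1 0 0 + A.1 1 1 * kB,
        Zlam.add_mem (Zlam.mul_mem hkA (hB 0 0)) (Zlam.mul_mem (hA 1 1) hkB), ?_⟩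
      have : (A * B).1 1 0 = A.1 1 0 * B.1 0 0 + A.1 1 1 * B.1 1 0 := by
        simp [Matrix.mul_apply, Fin.sum_univ_two]
      rw [this, hA10, hB10]; ring
  inv_mem' := by
    rintro A ⟨hA, kA, hkA, hA10⟩
    rw [Matrix.SpecialLinearGroup.SL2_inv_expl A]
    constructor
    · intro i j
      fin_cases i <;> fin_cases j <;>
        simp [Zlam.neg_mem, hA 0 0, hA 0 1, hA 1 0, hA 1 1]
    · exact ⟨-kA, Zlam.neg_mem hkA, by simp [hA10]⟩

/-- The congruence subgroup `G₀(τ) ≤ G₅`: elements of `G₅` represented by a matrix with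
entries in `ℤ[λ]` whose `(2,1)` entry is divisible by `τ`. -/
def G0 (τ : ℝ) : Subgroup PSL2R := G5 ⊓ (SL0 τ).map toPSL

/-- The principal congruence subgroup `G(ν)` of `G₅` (as a set): elements of `G₅`
represented by a matrix with entries in `ℤ[λ]` that is congruent to `±I` modulo `ν`. -/
def Gp (ν : ℝ) : Set PSL2R :=
  { g | g ∈ G5 ∧ ∃ A : SL2R, toPSL A = g ∧ (∀ i j, A.1 i j ∈ Zlam) ∧
      ((∀ i j, ∃ k ∈ Zlam, A.1 i j - (1 : Matrix (Fin 2) (Fin 2) ℝ) i j = ν * k) ∨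
       (∀ i j, ∃ k ∈ Zlam, A.1 i j + (1 : Matrix (Fin 2) (Fin 2) ℝ) i j = ν * k)) }

/-- `x/y` is in reduced form: `(x, y)ᵗ` is a column of a matrix representing an element
of `G₅`. -/
def IsReducedForm (x y : ℝ) : Prop :=
  ∃ A : SL2R, toPSL A ∈ G5 ∧
    ((A.1 0 0 = x ∧ A.1 1 0 = y) ∨ (A.1 0 1 = x ∧ A.1 1 1 = y))

/-- `g` is a gcd of `a` and `b` in `ℤ[λ]` (well defined up to units). -/
def IsGCDOf (g a b : Zlam) : Prop := g ∣ a ∧ g ∣ b ∧ ∀ d : Zlam, d ∣ a → d ∣ b → d ∣ g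

/-- `gcd(a, b)` is a unit in `ℤ[λ]`. -/
def CoprimeZ (a b : Zlam) : Prop := ∀ d : Zlam, d ∣ a → d ∣ b → IsUnit d

/-- `b = [τ]`: `(b)` is the largest ideal of `ℤ[λ]` with `(b²) ⊆ (τ)`. -/
def IsRadOf (τ b : Zlam) : Prop := τ ∣ b ^ 2 ∧ ∀ s : Zlam, τ ∣ s ^ 2 → b ∣ s

/-- `r ∈ ℤ[λ]` is `G₅`-elementary: whenever `x/(r·y)` is in reduced form,
`x² ≡ 1 (mod r)`. -/
def G5Elementary (r : Zlam) : Prop :=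
  ∀ x y : Zlam, IsReducedForm (x : ℝ) ((r : ℝ) * (y : ℝ)) → r ∣ (x ^ 2 - 1)

end

lemma Zlam_coe_two : ((2 : Zlam) : ℝ) = 2 := rfl

lemma Zlam_coe_three : ((3 : Zlam) : ℝ) = 3 := rfl

lemma Zlam_coe_four : ((4 : Zlam) : ℝ) = 4 := rfl

lemma Zlam_coe_sixteen : ((16 : Zlam) : ℝ) = 16 := rfl

lemma SL2R_mul_apply (A B : SL2R) (i j : Fin 2) :
    (A * B).1 i j = A.1 i 0 * B.1 0 j + A.1 i 1 * B.1 1 j := by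
  simp [Matrix.mul_apply, Fin.sum_univ_two]

lemma SL2R_inv_val (A : SL2R) :
    (A⁻¹).1 = !![A.1 1 1, -A.1 0 1; -A.1 1 0, A.1 0 0] := by
  rw [Matrix.SpecialLinearGroup.SL2_inv_expl A]
  rfl

lemma lam_sq : lam ^ 2 = lam + 1 := by
  unfold lam
  rw [Real.cos_pi_div_five]
  have h : Real.sqrt 5 ^ 2 = 5 := Real.sq_sqrt (by norm_num)
  linear_combination h / 4

/-- In `ℤ[λ]` one has `x⁴ ≡ x (mod 2)`, as `ℤ[λ]/2` is the field with four elements. -/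
lemma pow_four_sub_self (x : Zlam) : ∃ k : Zlam, x ^ 4 = x + 2 * k := by
  obtain ⟨x, hx⟩ := x
  suffices h : ∃ k ∈ Zlam, x ^ 4 = x + 2 * k by
    obtain ⟨k, hk, h⟩ := h
    exact ⟨⟨k, hk⟩, Subtype.ext (by push_cast; exact h)⟩
  unfold Zlam at hx
  induction hx using Subring.closure_induction with
  | mem y hy =>
    obtain rfl : y = lam := hy
    refine ⟨(lamZ + 1 : Zlam), SetLike.coe_mem _, ?_⟩
    have h1 : ((lamZ + 1 : Zlam) : ℝ) = lam + 1 := rfl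
    rw [h1]
    linear_combination (lam ^ 2 + lam + 2) * lam_sq
  | zero => exact ⟨0, Zlam.zero_mem, by norm_num⟩
  | one => exact ⟨0, Zlam.zero_mem, by norm_num⟩
  | add y z hy hz ihy ihz =>
    obtain ⟨k, hk, h⟩ := ihy
    obtain ⟨l, hl, h'⟩ := ihz
    lift y to Zlam using hy
    lift z to Zlam using hz
    lift k to Zlam using hk
    lift l to Zlam using hl
    refine ⟨(k + l + 2 * y ^ 3 * z + 3 * y ^ 2 * z ^ 2 + 2 * y * z ^ 3 : Zlam),
      SetLike.coe_mem _, ?_⟩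
    push_cast
    simp only [Zlam_coe_two, Zlam_coe_three]
    linear_combination h + h'
  | neg y hy ih =>
    obtain ⟨k, hk, h⟩ := ih
    exact ⟨y + k, Zlam.add_mem hy hk, by linear_combination h⟩
  | mul y z hy hz ihy ihz =>
    obtain ⟨k, hk, h⟩ := ihy
    obtain ⟨l, hl, h'⟩ := ihz
    lift y to Zlam using hy
    lift z to Zlam using hz
    lift k to Zlam using hk
    lift l to Zlam using hl
    refine ⟨(y * l + k * z + 2 * k * l : Zlam), SetLike.coe_mem _, ?_⟩
    push_cast
    simp only [Zlam_coe_two]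
    linear_combination (z : ℝ) ^ 4 * h + ((y : ℝ) + 2 * k) * h'

/-- The first column `(a, c)` of `A` lies in `ℤ[λ]` and satisfies
`a² + λac + c² ≡ 1 (mod 2)`. -/
def GoodCol (A : SL2R) : Prop :=
  ∃ a c k : Zlam, A.1 0 0 = a ∧ A.1 1 0 = c ∧ a ^ 2 + lamZ * a * c + c ^ 2 = 1 + 2 * k

lemma goodCol_T_mul {A : SL2R} (h : GoodCol A) : GoodCol (Tgen * A) := by
  obtain ⟨a, c, k, ha, hc, hk⟩ := h
  refine ⟨a + lamZ * c, c, k + lamZ * a * c + lamZ ^ 2 * c ^ 2, ?_, ?_, ?_⟩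
  · rw [SL2R_mul_apply]; simp [Tgen, lamZ, ha, hc]
  · rw [SL2R_mul_apply]; simp [Tgen, ha, hc]
  · linear_combination hk

lemma goodCol_T_inv_mul {A : SL2R} (h : GoodCol A) : GoodCol (Tgen⁻¹ * A) := by
  obtain ⟨a, c, k, ha, hc, hk⟩ := h
  refine ⟨a - lamZ * c, c, k - lamZ * a * c, ?_, ?_, ?_⟩
  · rw [SL2R_mul_apply, SL2R_inv_val]; simp [Tgen, lamZ, ha, hc]
    ring
  · rw [SL2R_mul_apply, SL2R_inv_val]; simp [Tgen, ha, hc]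
  · linear_combination hk

lemma goodCol_S_mul {A : SL2R} (h : GoodCol A) : GoodCol (Sgen * A) := by
  obtain ⟨a, c, k, ha, hc, hk⟩ := h
  refine ⟨-c, a, k - lamZ * a * c, ?_, ?_, ?_⟩
  · rw [SL2R_mul_apply]; simp [Sgen, ha, hc]
  · rw [SL2R_mul_apply]; simp [Sgen, ha, hc]
  · linear_combination hk

lemma goodCol_S_inv_mul {A : SL2R} (h : GoodCol A) : GoodCol (Sgen⁻¹ * A) := by
  obtain ⟨a, c, k, ha, hc, hk⟩ := h
  refine ⟨c, -a, k - lamZ * a * c, ?_, ?_, ?_⟩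
  · rw [SL2R_mul_apply, SL2R_inv_val]; simp [Sgen, ha, hc]
  · rw [SL2R_mul_apply, SL2R_inv_val]; simp [Sgen, ha, hc]
  · linear_combination hk

lemma goodCol_of_mem_center {A : SL2R} (h : A ∈ Subgroup.center SL2R) : GoodCol A := by
  obtain ⟨r, hr, hA⟩ := Matrix.SpecialLinearGroup.mem_center_iff.1 h
  have h00 : A.1 0 0 = r := by rw [← hA]; simp
  have h10 : A.1 1 0 = 0 := by rw [← hA]; simp
  simp only [Fintype.card_fin] at hr
  rcases eq_or_eq_neg_of_sq_eq_sq r 1 (by simpa using hr) with rfl | rfl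
  · exact ⟨1, 0, 0, by simpa using h00, by simpa using h10, by ring⟩
  · exact ⟨-1, 0, 0, by simpa using h00, by simpa using h10, by ring⟩

/-- The form `x² + λxy + y²` is invariant under `G₅` modulo `2`, evaluated on first columns. -/
lemma goodCol_of_mem_G5 {A : SL2R} (h : toPSL A ∈ G5) : GoodCol A := by
  suffices H : ∀ g ∈ G5, ∀ A : SL2R, toPSL A = g → GoodCol A from H _ h A rfl
  intro g hg
  unfold G5 at hg
  induction hg using Subgroup.closure_induction_left with
  | one =>
    intro A hA
    exact goodCol_of_mem_center ((QuotientGroup.eq_one_iff A).1 hA)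
  | mul_left x hx y hy ih =>
    intro A hA
    rcases hx with rfl | rfl
    · simpa using goodCol_T_mul (ih (Tgen⁻¹ * A) (by simp [hA]))
    · simpa using goodCol_S_mul (ih (Sgen⁻¹ * A) (by simp [hA]))
  | inv_mul_cancel x hx y hy ih =>
    intro A hA
    rcases hx with rfl | rfl
    · simpa using goodCol_T_inv_mul (ih (Tgen * A) (by simp [hA]))
    · simpa using goodCol_S_inv_mul (ih (Sgen * A) (by simp [hA]))

/-- A matrix representing an element of `G₀(2m)` has entries `a = 1 + 2x`, `b`, `c = 2mk` and
`d = 1 + 2y` in `ℤ[λ]`. -/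
lemma diag_odd {A : SL2R} {m : Zlam} (hA : A ∈ SL0 (2 * m : ℝ)) (hG : toPSL A ∈ G5) :
    ∃ x b k y : Zlam, A.1 0 0 = 1 + 2 * x ∧ A.1 0 1 = b ∧ A.1 1 0 = 2 * m * k ∧
      A.1 1 1 = 1 + 2 * y ∧ (1 + 2 * x) * (1 + 2 * y) - b * (2 * m * k) = 1 := by
  obtain ⟨hent, k, hk, hc⟩ := hA
  lift k to Zlam using hk
  obtain ⟨a, c, l, ha, hc', hl⟩ := goodCol_of_mem_G5 hG
  obtain ⟨b, hb⟩ : ∃ b : Zlam, (b : ℝ) = A.1 0 1 := ⟨⟨_, hent 0 1⟩, rfl⟩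
  obtain ⟨d, hd⟩ : ∃ d : Zlam, (d : ℝ) = A.1 1 1 := ⟨⟨_, hent 1 1⟩, rfl⟩
  have hcm : c = 2 * m * k := Subtype.ext (by push_cast; rw [← hc', hc]; rfl)
  have hdet : a * d - b * c = 1 := by
    apply Subtype.ext
    have := A.2
    rw [Matrix.det_fin_two] at this
    push_cast
    rw [← ha, ← hc', hb, hd]
    exact this
  subst hcm
  obtain ⟨q, hq⟩ := pow_four_sub_self a
  -- `a² = 1 + 2p`, hence `a ≡ a⁴ ≡ 1 (mod 2)`.
  obtain ⟨p, hp⟩ : ∃ p : Zlam, a ^ 2 = 1 + 2 * p :=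
    ⟨l - lamZ * a * m * k - 2 * m ^ 2 * k ^ 2, by linear_combination hl⟩
  obtain ⟨x, rfl⟩ : ∃ x : Zlam, a = 1 + 2 * x :=
    ⟨2 * p + 2 * p ^ 2 - q, by linear_combination (a ^ 2 + 1 + 2 * p) * hp - hq⟩
  obtain ⟨y, rfl⟩ : ∃ y : Zlam, d = 1 + 2 * y :=
    ⟨b * m * k - x * d, by linear_combination hdet⟩
  exact ⟨x, b, k, y, by rw [ha]; push_cast; rfl, hb.symm, hc, by rw [← hd]; push_cast; rfl, hdet⟩

/-- If both diagonal entries are odd and `4 ∣ c`, then the diagonal entries agree modulo `4`. -/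
lemma exists_diag_sub {n x b k y : Zlam}
    (h : (1 + 2 * x) * (1 + 2 * y) - b * (2 * (2 * n) * k) = 1) :
    ∃ w : Zlam, x - y = 2 * w := by
  have h2 : (2 : Zlam) ≠ 0 := by
    intro h0
    have := congrArg (Subtype.val) h0
    norm_num at this
  refine ⟨b * n * k - x * y - y, mul_left_cancel₀ h2 ?_⟩
  linear_combination h

/-- If `4 ∣ τ` then `σ² ∈ G₀(τ)` for every `σ ∈ G₀(τ/2)`; if `16 ∣ τ` then `σ⁴ ∈ G₀(τ)`
and `σ₁σ₂σ₁⁻¹σ₂⁻¹ ∈ G₀(τ)` for all `σ, σ₁, σ₂ ∈ G₀(τ/4)`. -/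
theorem pow_mem_G0 (τ : Zlam) :
    ((4 : Zlam) ∣ τ → ∀ σ ∈ G0 ((τ : ℝ) / 2), σ ^ 2 ∈ G0 (τ : ℝ)) ∧
    ((16 : Zlam) ∣ τ →
      (∀ σ ∈ G0 ((τ : ℝ) / 4), σ ^ 4 ∈ G0 (τ : ℝ)) ∧
      (∀ σ₁ ∈ G0 ((τ : ℝ) / 4), ∀ σ₂ ∈ G0 ((τ : ℝ) / 4),
        σ₁ * σ₂ * σ₁⁻¹ * σ₂⁻¹ ∈ G0 (τ : ℝ))) := by
  refine ⟨?_, ?_⟩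
  · rintro ⟨m, rfl⟩ σ ⟨hG, A, hA, rfl⟩
    refine ⟨G5.pow_mem hG 2, A ^ 2, ⟨(pow_mem hA 2).1, ?_⟩, map_pow _ _ _⟩
    have e : ((4 * m : Zlam) : ℝ) / 2 = 2 * m := by push_cast; simp only [Zlam_coe_four]; ring
    rw [e] at hA
    obtain ⟨x, b, k, y, ha, hb, hc, hd, -⟩ := diag_odd hA hG
    refine ⟨(k * (1 + x + y) : Zlam), SetLike.coe_mem _, ?_⟩
    have h : (A ^ 2).1 1 0 = A.1 1 0 * (A.1 0 0 + A.1 1 1) := by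
      rw [pow_two, SL2R_mul_apply]; ring
    rw [h, ha, hc, hd]
    push_cast
    simp only [Zlam_coe_four]
    ring
  rintro ⟨n, rfl⟩
  have e : ((16 * n : Zlam) : ℝ) / 4 = 2 * (2 * n : Zlam) := by push_cast; simp only [Zlam_coe_two, Zlam_coe_sixteen]; ring
  refine ⟨?_, ?_⟩
  · rintro σ ⟨hG, A, hA, rfl⟩
    refine ⟨G5.pow_mem hG 4, A ^ 4, ⟨(pow_mem hA 4).1, ?_⟩, map_pow _ _ _⟩
    rw [e] at hA
    obtain ⟨x, b, k, y, ha, hb, hc, hd, -⟩ := diag_odd hA hG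
    refine ⟨(k * (1 + x + y) *
      (1 + 2 * x + 2 * x ^ 2 + 2 * y + 2 * y ^ 2 + b * (4 * n * k)) : Zlam),
      SetLike.coe_mem _, ?_⟩
    have h : (A ^ 4).1 1 0 = A.1 1 0 * (A.1 0 0 + A.1 1 1) *
        (A.1 0 0 ^ 2 + 2 * A.1 0 1 * A.1 1 0 + A.1 1 1 ^ 2) := by
      rw [show A ^ 4 = (A * A) * (A * A) by rw [← pow_two, ← pow_two, ← pow_mul]]
      simp only [SL2R_mul_apply]; ring
    rw [h, ha, hb, hc, hd]
    push_cast
    simp only [Zlam_coe_two, Zlam_coe_four, Zlam_coe_sixteen]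
    ring
  · rintro σ₁ ⟨hG, A, hA, rfl⟩ σ₂ ⟨hG', B, hB, rfl⟩
    refine ⟨G5.mul_mem (G5.mul_mem (G5.mul_mem hG hG') (G5.inv_mem hG)) (G5.inv_mem hG'), A * B * A⁻¹ * B⁻¹,
      ⟨(mul_mem (mul_mem (mul_mem hA hB) (inv_mem hA)) (inv_mem hB)).1, ?_⟩, by simp⟩
    rw [e] at hA hB
    obtain ⟨x₁, b₁, k₁, y₁, ha₁, hb₁, hc₁, hd₁, hdet₁⟩ := diag_odd hA hG
    obtain ⟨x₂, b₂, k₂, y₂, ha₂, hb₂, hc₂, hd₂, hdet₂⟩ := diag_odd hB hG'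
    obtain ⟨w₁, hw₁⟩ := exists_diag_sub hdet₁
    obtain ⟨w₂, hw₂⟩ := exists_diag_sub hdet₂
    obtain rfl : x₁ = y₁ + 2 * w₁ := by linear_combination hw₁
    obtain rfl : x₂ = y₂ + 2 * w₂ := by linear_combination hw₂
    -- The first summand is the part linear in the lower left entries, the second the quadratic one.
    refine ⟨((1 + 2 * y₁) * (1 + 2 * y₂) * (k₁ * w₂ - k₂ * w₁) +
      n * ((k₁ * (1 + 2 * (y₂ + 2 * w₂)) + (1 + 2 * y₁) * k₂) * k₂ * b₁ -
        k₁ * b₂ * (k₂ * (1 + 2 * (y₁ + 2 * w₁)) + (1 + 2 * y₂) * k₁)) : Zlam),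
      SetLike.coe_mem _, ?_⟩
    have h : (A * B * A⁻¹ * B⁻¹).1 1 0 =
        (A.1 1 0 * B.1 0 0 + A.1 1 1 * B.1 1 0) * (B.1 1 0 * A.1 0 1 + B.1 1 1 * A.1 1 1) -
        (A.1 1 0 * B.1 0 1 + A.1 1 1 * B.1 1 1) * (B.1 1 0 * A.1 0 0 + B.1 1 1 * A.1 1 0) := by
      rw [show A * B * A⁻¹ * B⁻¹ = (A * B) * (B * A)⁻¹ by group,
        SL2R_mul_apply (A * B), SL2R_inv_val]
      simp [SL2R_mul_apply, -Matrix.SpecialLinearGroup.coe_mul]; ring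
    rw [h, ha₁, hb₁, hc₁, hd₁, ha₂, hb₂, hc₂, hd₂]
    push_cast
    simp only [Zlam_coe_two, Zlam_coe_sixteen]
    ring
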